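/- arXiv:2605.19409 — 4 statements merged into one kernel-verified Lean document; each statement's English description precedes it below -/
import Mathlib

section
/- Let d ≥ 1, let E = EuclideanSpace ℝ (Fin d), fix θ₀, θ₁ ∈ E, and let L : E → ℝ be differentiable. Let θ : [0,1) → E be differentiable with θ(0) = θ₀, and for each t ∈ [0,1) set g(t) = ∇L(θ(t)), u(t) = (1/(1-t))·(θ₁ - θ(t)). Assume g(t) ≠ 0 for all t ∈ [0,1), assume there are functions γ : [0,1) → ℝ with γ(t) ∈ [0,1] and a constant ρ ∈ [0,1) with ‖P_{g(t)}(u(t))‖ ≤ ρ·‖u(t)‖ for all t ∈ [0,1), and assume θ satisfies θ'(t) = u(t) - (1 - γ(t))·P_{g(t)}(u(t)) for all t ∈ [0,1). Then for every t ∈ [0,1), ‖θ(t) - θ₁‖ ≤ ‖θ₀ - θ₁‖·(1-t)^{1-ρ}. -/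
/-!
The weighted squared distance `‖θ t - θ₁‖² (1 - t)^(-2(1-ρ))` is a Lyapunov function.
By Cauchy–Schwarz and the bound on the projection, the velocity `v = u - (1 - γ) P_g u` satisfies
`⟪u, v⟫ ≥ (1 - ρ) ‖u‖²` (`inner_velocity_ge`). Since `θ - θ₁ = -(1 - t) u`, this says exactly that
the derivative of the Lyapunov function is nonpositive, so it is at most its value at `t = 0`;
the claim follows on taking square roots.
-/

open Set
open scoped RealInnerProductSpace

/-- Orthogonal projection of `u` onto the line spanned by `g`:
`P_g(u) = (⟪u, g⟫ / ‖g‖²) • g`. -/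
noncomputable def projLine {d : ℕ} (g u : EuclideanSpace ℝ (Fin d)) :
    EuclideanSpace ℝ (Fin d) :=
  (⟪u, g⟫ / ‖g‖ ^ 2) • g

/-- Subtracting from `u` a fraction of a vector of norm at most `ρ ‖u‖` keeps at least the
share `1 - ρ` of its component along `u`. -/
theorem inner_velocity_ge {F : Type*} [NormedAddCommGroup F] [InnerProductSpace ℝ F]
    (u p : F) {c ρ : ℝ} (hc : c ∈ Icc (0:ℝ) 1) (hp : ‖p‖ ≤ ρ * ‖u‖) :
    (1 - ρ) * ‖u‖ ^ 2 ≤ ⟪u, u - (1 - c) • p⟫ := by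
  obtain ⟨hc0, hc1⟩ := hc
  rw [inner_sub_right, inner_smul_right, real_inner_self_eq_norm_sq]
  have h1 : ⟪u, p⟫ ≤ ‖u‖ * ‖p‖ := real_inner_le_norm u p
  have h2 : (1 - c) * ⟪u, p⟫ ≤ (1 - c) * (‖u‖ * ‖p‖) :=
    mul_le_mul_of_nonneg_left h1 (by linarith)
  have h3 : (1 - c) * (‖u‖ * ‖p‖) ≤ ‖u‖ * ‖p‖ :=
    mul_le_of_le_one_left (by positivity) (by linarith)
  have h4 : ‖u‖ * ‖p‖ ≤ ‖u‖ * (ρ * ‖u‖) := mul_le_mul_of_nonneg_left hp (norm_nonneg u)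
  nlinarith

theorem stmt0 {d : ℕ} (hd : 1 ≤ d)
    (θ₀ θ₁ : EuclideanSpace ℝ (Fin d))
    (L : EuclideanSpace ℝ (Fin d) → ℝ) (hL : Differentiable ℝ L)
    (θ : ℝ → EuclideanSpace ℝ (Fin d)) (hθ0 : θ 0 = θ₀)
    (g u : ℝ → EuclideanSpace ℝ (Fin d))
    (hg : ∀ t ∈ Ico (0:ℝ) 1, g t = gradient L (θ t))
    (hu : ∀ t ∈ Ico (0:ℝ) 1, u t = (1 / (1 - t)) • (θ₁ - θ t))
    (hgne : ∀ t ∈ Ico (0:ℝ) 1, g t ≠ 0)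
    (γ : ℝ → ℝ) (hγ : ∀ t ∈ Ico (0:ℝ) 1, γ t ∈ Icc (0:ℝ) 1)
    (ρ : ℝ) (hρ : ρ ∈ Ico (0:ℝ) 1)
    (hproj : ∀ t ∈ Ico (0:ℝ) 1, ‖projLine (g t) (u t)‖ ≤ ρ * ‖u t‖)
    (hode : ∀ t ∈ Ico (0:ℝ) 1,
      HasDerivWithinAt θ (u t - (1 - γ t) • projLine (g t) (u t)) (Ico (0:ℝ) 1) t) :
    ∀ t ∈ Ico (0:ℝ) 1, ‖θ t - θ₁‖ ≤ ‖θ₀ - θ₁‖ * (1 - t) ^ (1 - ρ) := by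
  have hpos : ∀ t ∈ Ico (0:ℝ) 1, 0 < 1 - t := fun t ht => by linarith [ht.2]
  set q : ℝ := -(2 * (1 - ρ)) with hq
  have hder : ∀ t ∈ Ico (0:ℝ) 1,
      HasDerivWithinAt (fun s => ‖θ s - θ₁‖ ^ 2 * (1 - s) ^ q)
        (2 * ⟪θ t - θ₁, u t - (1 - γ t) • projLine (g t) (u t)⟫ * (1 - t) ^ q
          + ‖θ t - θ₁‖ ^ 2 * (-1 * q * (1 - t) ^ (q - 1))) (Ico (0:ℝ) 1) t := by
    intro t ht
    have h1 := ((hode t ht).sub_const θ₁).norm_sq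
    have h2 := ((hasDerivWithinAt_id t (Ico (0:ℝ) 1)).const_sub 1).rpow_const (p := q)
      (Or.inl (hpos t ht).ne')
    exact h1.mul h2
  have hanti : AntitoneOn (fun s => ‖θ s - θ₁‖ ^ 2 * (1 - s) ^ q) (Ico (0:ℝ) 1) := by
    refine antitoneOn_of_hasDerivWithinAt_nonpos (convex_Ico 0 1)
      (fun t ht => (hder t ht).continuousWithinAt)
      (fun t ht => (hder t (interior_subset ht)).mono interior_subset) ?_
    intro t ht
    replace ht := interior_subset ht
    have hs := hpos t ht
    have hw : θ t - θ₁ = (-(1 - t)) • u t := by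
      rw [hu t ht, smul_smul, neg_mul, mul_one_div_cancel hs.ne', neg_one_smul, neg_sub]
    have hkey := inner_velocity_ge (u t) (projLine (g t) (u t)) (hγ t ht) (hproj t ht)
    have hsplit : (1 - t) ^ q = (1 - t) ^ (q - 1) * (1 - t) := by
      rw [Real.rpow_sub_one hs.ne', div_mul_cancel₀ _ hs.ne']
    rw [hw, inner_smul_left, norm_smul, hsplit, norm_neg, Real.norm_of_nonneg hs.le, hq]
    simp only [conj_trivial]
    have hA : 0 ≤ (1 - t) ^ (-(2 * (1 - ρ)) - 1) * (1 - t) ^ 2 := by positivity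
    linarith [mul_le_mul_of_nonneg_left hkey hA]
  intro t ht
  have hs := hpos t ht
  have h := hanti (by simp : (0:ℝ) ∈ Ico (0:ℝ) 1) ht ht.1
  have ha : 0 < (1 - t) ^ (1 - ρ) := Real.rpow_pos_of_pos hs _
  have hqa : (1 - t) ^ q = (((1 - t) ^ (1 - ρ)) ^ 2)⁻¹ := by
    rw [hq, Real.rpow_neg hs.le, mul_comm, Real.rpow_mul hs.le, Real.rpow_two]
  simp only [hθ0, sub_zero, Real.one_rpow, mul_one, hqa] at h
  rw [← div_eq_mul_inv, div_le_iff₀ (by positivity), ← mul_pow] at h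
  exact (sq_le_sq₀ (norm_nonneg _) (by positivity)).1 h
end

section
/- Let d ≥ 1, let E = EuclideanSpace ℝ (Fin d), fix θ₀, θ₁ ∈ E, and let L : E → ℝ be differentiable. Let θ : [0,1) → E be differentiable with θ(0) = θ₀, and for each t ∈ [0,1) set g(t) = ∇L(θ(t)), u(t) = (1/(1-t))·(θ₁ - θ(t)). Assume g(t) ≠ 0 for all t ∈ [0,1), assume there are functions γ : [0,1) → ℝ with γ(t) ∈ [0,1] and a constant ρ ∈ [0,1) with ‖P_{g(t)}(u(t))‖ ≤ ρ·‖u(t)‖ for all t ∈ [0,1), and assume θ satisfies θ'(t) = u(t) - (1 - γ(t))·P_{g(t)}(u(t)) for all t ∈ [0,1). Then θ(t) tends to θ₁ as t → 1⁻; in particular the trajectory admits a continuous extension to [0,1] with value θ₁ at t = 1. -/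
/-!
With `V t = ‖θ t - θ₁‖²` and `θ t - θ₁ = -(1 - t) u t`, the equation of motion gives
`V' = -2 (1 - t) ⟪u, u - (1 - γ) P_g u⟫`. By Cauchy–Schwarz and `‖P_g u‖ ≤ ρ ‖u‖`, the inner
product is at least `(1 - ρ) ‖u‖²` (`inner_descent`), so `(1 - t) V' ≤ -2 (1 - ρ) V`.
A Grönwall argument (`le_of_deriv_decay`) then yields `V t ≤ V 0 (1 - t) ^ (2 (1 - ρ))`,
which tends to `0` because `ρ < 1`.
-/

open Set
open scoped RealInnerProductSpace

/-- The corrected velocity `u - (1 - γ) p` keeps at least the fraction `1 - ρ` of the component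
of `u` along itself. Only the size of `p` matters, not that it is a projection of `u`. -/
lemma inner_descent {F : Type*} [NormedAddCommGroup F] [InnerProductSpace ℝ F]
    {u p : F} {ρ γ : ℝ} (hp : ‖p‖ ≤ ρ * ‖u‖) (hγ : γ ∈ Icc (0:ℝ) 1) :
    (1 - ρ) * ‖u‖ ^ 2 ≤ ⟪u, u - (1 - γ) • p⟫ := by
  rw [inner_sub_right, real_inner_smul_right, real_inner_self_eq_norm_sq]
  have hup : ⟪u, p⟫ ≤ ρ * ‖u‖ ^ 2 := by
    nlinarith [real_inner_le_norm u p, mul_le_mul_of_nonneg_left hp (norm_nonneg u)]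
  have hρu : 0 ≤ ρ * ‖u‖ ^ 2 := by
    nlinarith [mul_nonneg ((norm_nonneg p).trans hp) (norm_nonneg u)]
  nlinarith [mul_le_mul_of_nonneg_left hup (sub_nonneg.2 hγ.2), mul_nonneg hγ.1 hρu]

/-- Grönwall inequality with the singular rate `a / (1 - t)`: the function
`t ↦ V t * (1 - t) ^ (-a)` is nonincreasing on `[0, 1)`. -/
lemma le_of_deriv_decay {V V' : ℝ → ℝ} {a : ℝ}
    (hV : ∀ t ∈ Ico (0:ℝ) 1, HasDerivWithinAt V (V' t) (Ico 0 1) t)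
    (hle : ∀ t ∈ Ico (0:ℝ) 1, (1 - t) * V' t ≤ -a * V t) :
    ∀ t ∈ Ico (0:ℝ) 1, V t ≤ V 0 * (1 - t) ^ a := by
  have hd : ∀ t ∈ Ico (0:ℝ) 1, HasDerivWithinAt (fun s => V s * (1 - s) ^ (-a))
      (V' t * (1 - t) ^ (-a) + V t * (-1 * -a * (1 - t) ^ (-a - 1))) (Ico 0 1) t := by
    intro t ht
    have h1t : 0 < 1 - t := by linarith [ht.2]
    exact (hV t ht).mul
      (((hasDerivAt_id t).const_sub 1).rpow_const (Or.inl h1t.ne')).hasDerivWithinAt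
  have hanti : AntitoneOn (fun s => V s * (1 - s) ^ (-a)) (Ico 0 1) := by
    refine antitoneOn_of_hasDerivWithinAt_nonpos (convex_Ico 0 1)
      (fun t ht => (hd t ht).continuousWithinAt)
      (fun t ht => (hd t (interior_subset ht)).mono interior_subset) fun t ht => ?_
    have ht := interior_subset ht
    have h1t : 0 < 1 - t := by linarith [ht.2]
    -- Factor out `(1 - t) ^ (-a - 1)`, which leaves `(1 - t) * V' t + a * V t`.
    have hsplit : (1 - t) ^ (-a) = (1 - t) ^ (-a - 1) * (1 - t) := by
      rw [Real.rpow_sub_one h1t.ne', div_mul_cancel₀ _ h1t.ne']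
    rw [hsplit]
    nlinarith [mul_le_mul_of_nonneg_left (hle t ht) (Real.rpow_nonneg h1t.le (-a - 1))]
  intro t ht
  have h1t : 0 < 1 - t := by linarith [ht.2]
  have h := hanti ⟨le_rfl, one_pos⟩ ht ht.1
  simp only [sub_zero, Real.one_rpow, mul_one] at h
  rwa [Real.rpow_neg h1t.le, ← div_eq_mul_inv, div_le_iff₀ (Real.rpow_pos_of_pos h1t a)] at h

theorem stmt1 {d : ℕ} (hd : 1 ≤ d)
    (θ₀ θ₁ : EuclideanSpace ℝ (Fin d))
    (L : EuclideanSpace ℝ (Fin d) → ℝ) (hL : Differentiable ℝ L)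
    (θ : ℝ → EuclideanSpace ℝ (Fin d)) (hθ0 : θ 0 = θ₀)
    (g u : ℝ → EuclideanSpace ℝ (Fin d))
    (hg : ∀ t ∈ Ico (0:ℝ) 1, g t = gradient L (θ t))
    (hu : ∀ t ∈ Ico (0:ℝ) 1, u t = (1 / (1 - t)) • (θ₁ - θ t))
    (hgne : ∀ t ∈ Ico (0:ℝ) 1, g t ≠ 0)
    (γ : ℝ → ℝ) (hγ : ∀ t ∈ Ico (0:ℝ) 1, γ t ∈ Icc (0:ℝ) 1)
    (ρ : ℝ) (hρ : ρ ∈ Ico (0:ℝ) 1)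
    (hproj : ∀ t ∈ Ico (0:ℝ) 1, ‖projLine (g t) (u t)‖ ≤ ρ * ‖u t‖)
    (hode : ∀ t ∈ Ico (0:ℝ) 1,
      HasDerivWithinAt θ (u t - (1 - γ t) • projLine (g t) (u t)) (Ico (0:ℝ) 1) t) :
    Filter.Tendsto θ (nhdsWithin 1 (Ico (0:ℝ) 1)) (nhds θ₁) ∧
      ∃ θext : ℝ → EuclideanSpace ℝ (Fin d),
        ContinuousOn θext (Icc (0:ℝ) 1) ∧
        (∀ t ∈ Ico (0:ℝ) 1, θext t = θ t) ∧ θext 1 = θ₁ := by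
  have hc : 0 < 1 - ρ := by linarith [hρ.2]
  set V : ℝ → ℝ := fun t => ‖θ t - θ₁‖ ^ 2 with hV
  set V' : ℝ → ℝ := fun t =>
    2 * ⟪θ t - θ₁, u t - (1 - γ t) • projLine (g t) (u t)⟫ with hV'
  have hVd : ∀ t ∈ Ico (0:ℝ) 1, HasDerivWithinAt V (V' t) (Ico 0 1) t := fun t ht =>
    ((hode t ht).sub_const θ₁).norm_sq
  have hVle : ∀ t ∈ Ico (0:ℝ) 1, (1 - t) * V' t ≤ -(2 * (1 - ρ)) * V t := by
    intro t ht
    have h1t : (1 - t) ≠ 0 := by linarith [ht.2]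
    have he : θ t - θ₁ = -((1 - t) • u t) := by
      rw [hu t ht, smul_smul, mul_one_div_cancel h1t, one_smul, neg_sub]
    have hdes := inner_descent (hproj t ht) (hγ t ht)
    have hVt : V t = (1 - t) ^ 2 * ‖u t‖ ^ 2 := by
      simp only [hV, he, norm_neg, norm_smul, mul_pow, Real.norm_eq_abs, sq_abs]
    have hVt' : V' t =
        -(2 * (1 - t) * ⟪u t, u t - (1 - γ t) • projLine (g t) (u t)⟫) := by
      simp only [hV', he, inner_neg_left, real_inner_smul_left]
      ring
    rw [hVt, hVt']
    nlinarith [mul_le_mul_of_nonneg_left hdes (sq_nonneg (1 - t))]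
  have hbound := le_of_deriv_decay hVd hVle
  have hlim : Filter.Tendsto (fun t : ℝ => V 0 * (1 - t) ^ (2 * (1 - ρ)))
      (nhdsWithin 1 (Ico (0:ℝ) 1)) (nhds 0) := by
    have hcont : Continuous (fun t : ℝ => V 0 * (1 - t) ^ (2 * (1 - ρ))) :=
      continuous_const.mul
        ((Real.continuous_rpow_const (by linarith)).comp (continuous_const.sub continuous_id))
    have := hcont.tendsto 1
    simp only [sub_self, Real.zero_rpow (by linarith : 2 * (1 - ρ) ≠ 0), mul_zero] at this
    exact this.mono_left nhdsWithin_le_nhds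
  have hVlim : Filter.Tendsto V (nhdsWithin 1 (Ico (0:ℝ) 1)) (nhds 0) :=
    squeeze_zero' (Filter.Eventually.of_forall fun t => sq_nonneg _)
      (eventually_mem_nhdsWithin.mono hbound) hlim
  have hθlim : Filter.Tendsto θ (nhdsWithin 1 (Ico (0:ℝ) 1)) (nhds θ₁) := by
    rw [tendsto_iff_norm_sub_tendsto_zero]
    simpa [hV, Real.sqrt_sq] using hVlim.sqrt
  refine ⟨hθlim, Function.update θ 1 θ₁, ?_, fun t ht => ?_, by simp⟩
  · rw [continuousOn_update_iff]
    simp only [Icc_sdiff_right]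
    exact ⟨fun t ht => (hode t ht).continuousWithinAt, fun _ => hθlim⟩
  · exact Function.update_of_ne ht.2.ne _ _
end

section
/- Let d ≥ 1, let E = EuclideanSpace ℝ (Fin d), fix θ₀, θ₁ ∈ E, and let L : E → ℝ be differentiable. Let θ : [0,1) → E be differentiable with θ(0) = θ₀, and for each t ∈ [0,1) set g(t) = ∇L(θ(t)), u(t) = (1/(1-t))·(θ₁ - θ(t)). Assume g(t) ≠ 0 for all t ∈ [0,1), assume there are functions γ : [0,1) → ℝ with γ(t) ∈ [0,1] and a constant ρ ∈ [0,1) with ‖P_{g(t)}(u(t))‖ ≤ ρ·‖u(t)‖ for all t ∈ [0,1), and assume θ satisfies θ'(t) = u(t) - (1 - γ(t))·P_{g(t)}(u(t)) for all t ∈ [0,1). Then the function V(t) = ‖θ(t) - θ₁‖² is differentiable on [0,1) and satisfies the differential inequality V'(t) ≤ -(2·(1-ρ)/(1-t))·V(t) for every t ∈ [0,1). -/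
/-!
Along the flow `θ - θ₁ = -(1 - t) • u`, so with `p = P_g(u)` the derivative of `‖θ - θ₁‖ ^ 2` is
`-2 (1 - t) (‖u‖ ^ 2 - (1 - γ) ⟪u, p⟫)`. By Cauchy-Schwarz and `‖p‖ ≤ ρ ‖u‖`, the correction term
`(1 - γ) ⟪u, p⟫` is at most `ρ ‖u‖ ^ 2`, and `‖θ - θ₁‖ ^ 2 = (1 - t) ^ 2 ‖u‖ ^ 2` turns the
resulting bound into the claim.
-/

open Set
open scoped RealInnerProductSpace

theorem stmt4 {d : ℕ} (hd : 1 ≤ d)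
    (θ₀ θ₁ : EuclideanSpace ℝ (Fin d))
    (L : EuclideanSpace ℝ (Fin d) → ℝ) (hL : Differentiable ℝ L)
    (θ : ℝ → EuclideanSpace ℝ (Fin d)) (hθ0 : θ 0 = θ₀)
    (g u : ℝ → EuclideanSpace ℝ (Fin d))
    (hg : ∀ t ∈ Ico (0:ℝ) 1, g t = gradient L (θ t))
    (hu : ∀ t ∈ Ico (0:ℝ) 1, u t = (1 / (1 - t)) • (θ₁ - θ t))
    (hgne : ∀ t ∈ Ico (0:ℝ) 1, g t ≠ 0)
    (γ : ℝ → ℝ) (hγ : ∀ t ∈ Ico (0:ℝ) 1, γ t ∈ Icc (0:ℝ) 1)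
    (ρ : ℝ) (hρ : ρ ∈ Ico (0:ℝ) 1)
    (hproj : ∀ t ∈ Ico (0:ℝ) 1, ‖projLine (g t) (u t)‖ ≤ ρ * ‖u t‖)
    (hode : ∀ t ∈ Ico (0:ℝ) 1,
      HasDerivWithinAt θ (u t - (1 - γ t) • projLine (g t) (u t)) (Ico (0:ℝ) 1) t) :
    ∀ t ∈ Ico (0:ℝ) 1, ∃ V' : ℝ,
      HasDerivWithinAt (fun s => ‖θ s - θ₁‖ ^ 2) V' (Ico (0:ℝ) 1) t ∧
      V' ≤ -(2 * (1 - ρ) / (1 - t)) * ‖θ t - θ₁‖ ^ 2 := by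
  intro t ht
  have h1t : 0 < 1 - t := sub_pos.mpr ht.2
  refine ⟨_, ((hode t ht).sub_const θ₁).norm_sq, ?_⟩
  have hw : θ t - θ₁ = -((1 - t) • u t) := by
    rw [hu t ht, smul_smul, mul_one_div_cancel h1t.ne', one_smul, neg_sub]
  obtain ⟨hγ0, hγ1⟩ := hγ t ht
  have hp := hproj t ht
  rw [hw]
  generalize projLine (g t) (u t) = p at hp ⊢
  generalize u t = v at hp ⊢
  have hcross : (1 - γ t) * ⟪v, p⟫ ≤ ρ * ‖v‖ ^ 2 := by
    have hcs : ⟪v, p⟫ ≤ ρ * ‖v‖ ^ 2 :=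
      calc ⟪v, p⟫ ≤ ‖v‖ * ‖p‖ := real_inner_le_norm v p
        _ ≤ ‖v‖ * (ρ * ‖v‖) := by gcongr
        _ = ρ * ‖v‖ ^ 2 := by ring
    calc (1 - γ t) * ⟪v, p⟫ ≤ (1 - γ t) * (ρ * ‖v‖ ^ 2) :=
          mul_le_mul_of_nonneg_left hcs (by linarith)
      _ ≤ 1 * (ρ * ‖v‖ ^ 2) :=
          mul_le_mul_of_nonneg_right (by linarith) (mul_nonneg hρ.1 (sq_nonneg _))
      _ = ρ * ‖v‖ ^ 2 := one_mul _
  have hR : -(2 * (1 - ρ) / (1 - t)) * ‖-((1 - t) • v)‖ ^ 2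
      = -(2 * (1 - t)) * ((1 - ρ) * ‖v‖ ^ 2) := by
    rw [norm_neg, norm_smul, Real.norm_of_nonneg h1t.le]
    field_simp
  rw [hR, inner_neg_left, real_inner_smul_left, inner_sub_right, real_inner_smul_right,
    real_inner_self_eq_norm_sq]
  linarith [mul_le_mul_of_nonneg_left hcross h1t.le]
end

section
/- Let d ≥ 1, let E = EuclideanSpace ℝ (Fin d), fix θ₀, θ₁ ∈ E, let L : E → ℝ be differentiable, and set ΔL = L(θ₁) - L(θ₀). Let θ : [0,1) → E be differentiable with θ(0) = θ₀, and for t ∈ [0,1) set g(t) = ∇L(θ(t)), u(t) = (1/(1-t))·(θ₁ - θ(t)); assume g(t) ≠ 0 for all t ∈ [0,1). Define γ(t) = 1 if ⟨g(t), u(t)⟩ ≤ 0 and γ(t) = min(max(ΔL/⟨g(t), u(t)⟩, 0), 1) if ⟨g(t), u(t)⟩ > 0, and assume θ'(t) = (u(t) - P_{g(t)}(u(t))) + γ(t)·P_{g(t)}(u(t)) for all t ∈ [0,1). Then for every t ∈ [0,1), L(θ(t)) ≤ L(θ₀) + t·max(ΔL, 0). -/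
/-!
The correction factor `γ` is chosen so that `L ∘ θ` never grows faster than `max ΔL 0`: replacing
the component `P_g u` of the velocity by `γ P_g u` turns the derivative `⟪g, u⟫` of `L` along the
path into `γ ⟪g, u⟫`, and the definition of `γ` bounds this by `max ΔL 0`. The claim then follows
from the mean value inequality for right derivatives.
-/

open Set
open scoped RealInnerProductSpace

/-- The component of `u` orthogonal to `g` does not contribute to the pairing with `g`, and the
projection carries all of `⟪g, u⟫`, so rescaling it by `c` rescales the pairing by `c`. -/
lemma inner_corrected_velocity {d : ℕ} {g u : EuclideanSpace ℝ (Fin d)} (hg : g ≠ 0) (c : ℝ) :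
    ⟪g, (u - projLine g u) + c • projLine g u⟫ = c * ⟪g, u⟫ := by
  have h : ‖g‖ ≠ 0 := norm_ne_zero_iff.mpr hg
  have hp : ⟪g, projLine g u⟫ = ⟪g, u⟫ := by
    rw [projLine, real_inner_smul_right, real_inner_self_eq_norm_sq, real_inner_comm]
    field_simp
  rw [inner_add_right, inner_sub_right, real_inner_smul_right, hp]
  ring

/-- The defining property of the factor `γ`: with `D = ΔL` and `s = ⟪g, u⟫`, the derivative
`γ s` of `L` along the path is at most `max ΔL 0`. -/
lemma gain_mul_le (D s : ℝ) :
    (if s ≤ 0 then 1 else min (max (D / s) 0) 1) * s ≤ max D 0 := by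
  split_ifs with h
  · rw [one_mul]
    exact h.trans (le_max_right _ _)
  · push Not at h
    calc min (max (D / s) 0) 1 * s ≤ max (D / s) 0 * s := by
          gcongr
          exact min_le_left _ _
      _ = max D 0 := by
          rw [max_mul_of_nonneg _ _ h.le, div_mul_cancel₀ _ h.ne', zero_mul]

theorem stmt9 {d : ℕ} (hd : 1 ≤ d)
    (θ₀ θ₁ : EuclideanSpace ℝ (Fin d))
    (L : EuclideanSpace ℝ (Fin d) → ℝ) (hL : Differentiable ℝ L)
    (θ : ℝ → EuclideanSpace ℝ (Fin d)) (hθ0 : θ 0 = θ₀)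
    (g u : ℝ → EuclideanSpace ℝ (Fin d))
    (hg : ∀ t ∈ Ico (0:ℝ) 1, g t = gradient L (θ t))
    (hu : ∀ t ∈ Ico (0:ℝ) 1, u t = (1 / (1 - t)) • (θ₁ - θ t))
    (hgne : ∀ t ∈ Ico (0:ℝ) 1, g t ≠ 0)
    (γ : ℝ → ℝ)
    (hγ : ∀ t ∈ Ico (0:ℝ) 1,
      γ t = if ⟪g t, u t⟫ ≤ 0 then 1
            else min (max ((L θ₁ - L θ₀) / ⟪g t, u t⟫) 0) 1)
    (hode : ∀ t ∈ Ico (0:ℝ) 1,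
      HasDerivWithinAt θ
        ((u t - projLine (g t) (u t)) + γ t • projLine (g t) (u t))
        (Ico (0:ℝ) 1) t) :
    ∀ t ∈ Ico (0:ℝ) 1, L (θ t) ≤ L θ₀ + t * max (L θ₁ - L θ₀) 0 := by
  have hderiv : ∀ s ∈ Ico (0:ℝ) 1,
      HasDerivWithinAt (fun r => L (θ r)) (γ s * ⟪g s, u s⟫) (Ico (0:ℝ) 1) s := by
    intro s hs
    have h := (hL (θ s)).hasGradientAt.hasFDerivAt.comp_hasDerivWithinAt s (hode s hs)
    rw [← hg s hs, InnerProductSpace.toDual_apply_apply,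
      inner_corrected_velocity (hgne s hs)] at h
    exact h
  intro t ht
  refine image_le_of_deriv_right_le_deriv_boundary (f := fun r => L (θ r))
    (f' := fun s => γ s * ⟪g s, u s⟫) (a := 0) (b := t)
    (B := fun r => L θ₀ + r * max (L θ₁ - L θ₀) 0) (B' := fun _ => max (L θ₁ - L θ₀) 0)
    ?_ ?_ ?_ (by fun_prop) ?_ ?_ (right_mem_Icc.mpr ht.1)
  · intro s hs
    exact ((hderiv s ⟨hs.1, hs.2.trans_lt ht.2⟩).continuousWithinAt).mono
      (Icc_subset_Ico_right ht.2)
  · intro s hs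
    have hs1 : s < 1 := hs.2.trans ht.2
    -- Near `s`, every point of `[s, ∞)` lies in `[0, 1)`.
    exact (hderiv s ⟨hs.1, hs1⟩).mono_of_mem_nhdsWithin
      (Filter.mem_of_superset (Ico_mem_nhdsGE hs1) (Ico_subset_Ico_left hs.1))
  · simp [hθ0]
  · intro s _
    simpa using (((hasDerivAt_id s).mul_const (max (L θ₁ - L θ₀) 0)).const_add
      (L θ₀)).hasDerivWithinAt
  · intro s hs
    have h := gain_mul_le (L θ₁ - L θ₀) ⟪g s, u s⟫
    rwa [← hγ s ⟨hs.1, hs.2.trans ht.2⟩] at h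
end
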